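/- Braid relations for Pitman transforms: let V be a finite-dimensional real vector space with dual space V∨, T > 0, and let α, β ∈ V and α∨, β∨ ∈ V∨ satisfy α∨(α) = β∨(β) = 2, α∨(β) < 0, β∨(α) < 0, and α∨(β)·β∨(α) = 4 cos²(π/n) for some integer n ≥ 2. Then P_α P_β P_α ⋯ = P_β P_α P_β ⋯, where each side is the composition of n alternating factors, as transformations of the set of continuous paths π : [0,T] → V with π(0) = 0. -/

import Mathlib

/-- The Pitman transform associated with a pair `(α, α∨)`:
`P_α π (t) = π t − (inf_{0 ≤ s ≤ t} α∨(π s)) • α`. -/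
noncomputable def pitman {V : Type*} [AddCommGroup V] [Module ℝ V]
    (α : V) (αv : Module.Dual ℝ V) (π : ℝ → V) : ℝ → V :=
  fun t => π t - sInf ((fun s => αv (π s)) '' Set.Icc 0 t) • α

/-- `altComp P Q n` is the alternating composition `P ∘ Q ∘ P ∘ ⋯` with `n` factors. -/
def altComp {X : Type*} (P Q : X → X) : ℕ → (X → X)
  | 0 => id
  | n + 1 => P ∘ altComp Q P n

/-!
Rescaling `(α, α∨)` to `(c α, c⁻¹ α∨)` does not change `P_α`, so one may assume that
`α∨(β) = β∨(α) = -2 cos θ` with `θ = π / n`. Put `x = α∨ ∘ π`, `y = β∨ ∘ π` and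
`W i = sin ((i + 1) θ) / sin θ`. By induction on the number `k` of factors,
`P_α P_β P_α ⋯ π (t) = π t - A_k • α - B_k • β`, where `A_k` is the infimum of
`W 0 * x s₀ + W 1 * y s₁ + W 2 * x s₂ + ⋯` (`k` terms) over `t ≥ s₀ ≥ s₁ ≥ ⋯ ≥ 0` and `B_k` is the
infimum of the same expression with `x` and `y` exchanged and `k - 1` terms. Since `W (n - 1) = 0`,
for `k = n` the last term of `A_n` drops out, and the formula becomes symmetric in `α` and `β`.

The induction step needs the running infimum `m` of `x` to be eliminated from nested infima of
`x - 2 m` and `y + 2 cos θ * m`. This rests on Pitman's identity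
`inf_{[r, t]} (x - 2 m) = inf_{[r, t]} x - m r - m t`, the recurrence
`W (i + 2) = 2 cos θ * W (i + 1) - W i` cancelling the terms that remain.
-/

open Set

/-- The infimum of `f` over `[a, b]`; the Pitman transform is
`π t - intervalInf (α∨ ∘ π) 0 t • α`. -/
noncomputable def intervalInf (f : ℝ → ℝ) (a b : ℝ) : ℝ := sInf (f '' Icc a b)

section IntervalInf

variable {f g : ℝ → ℝ} {a b c r s : ℝ}

lemma intervalInf_le (hf : BddBelow (f '' Icc a b)) (hs : s ∈ Icc a b) :
    intervalInf f a b ≤ f s :=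
  csInf_le hf (mem_image_of_mem f hs)

lemma le_intervalInf_iff (hab : a ≤ b) (hf : BddBelow (f '' Icc a b)) :
    c ≤ intervalInf f a b ↔ ∀ s ∈ Icc a b, c ≤ f s :=
  (le_csInf_iff hf ((nonempty_Icc.2 hab).image f)).trans forall_mem_image

lemma intervalInf_congr (h : EqOn f g (Icc a b)) : intervalInf f a b = intervalInf g a b :=
  congrArg sInf h.image_eq

lemma intervalInf_anti (hf : BddBelow (f '' Icc a b)) (har : a ≤ r) (hrs : r ≤ s) (hsb : s ≤ b) :
    intervalInf f a b ≤ intervalInf f r s :=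
  csInf_le_csInf hf ((nonempty_Icc.2 hrs).image f) (image_mono (Icc_subset_Icc har hsb))

lemma intervalInf_eq_min (hf : BddBelow (f '' Icc a b)) (hr : r ∈ Icc a b) :
    intervalInf f a b = min (intervalInf f a r) (intervalInf f r b) := by
  have hsplit := Icc_union_Icc_eq_Icc hr.1 hr.2
  rw [← hsplit, image_union, bddBelow_union] at hf
  rw [intervalInf, ← hsplit, image_union]
  exact csInf_union hf.1 ((nonempty_Icc.2 hr.1).image f) hf.2 ((nonempty_Icc.2 hr.2).image f)

lemma intervalInf_const_mul (hc : 0 ≤ c) (f : ℝ → ℝ) (a b : ℝ) :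
    intervalInf (fun s => c * f s) a b = c * intervalInf f a b := by
  rw [intervalInf, intervalInf, ← smul_eq_mul, ← Real.sInf_smul_of_nonneg hc, ← image_smul,
    image_image]
  rfl

lemma intervalInf_sub_const (hab : a ≤ b) (hf : BddBelow (f '' Icc a b)) (c : ℝ) :
    intervalInf (fun s => f s - c) a b = intervalInf f a b - c := by
  have h := (OrderIso.subRight c).map_csInf' ((nonempty_Icc.2 hab).image f) hf
  rw [image_image] at h
  exact h.symm

lemma bddBelow_image_add {ι : Type*} {u v : ι → ℝ} {S : Set ι} (hu : BddBelow (u '' S))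
    (hv : BddBelow (v '' S)) : BddBelow ((fun i => u i + v i) '' S) :=
  (hu.add hv).mono <| image_subset_iff.2 fun _ hi =>
    add_mem_add (mem_image_of_mem u hi) (mem_image_of_mem v hi)

lemma bddBelow_runningInf (hf : BddBelow (f '' Icc a b)) : BddBelow (intervalInf f a '' Icc a b) :=
  ⟨intervalInf f a b, forall_mem_image.2 fun _ hs => intervalInf_anti hf le_rfl hs.1 hs.2⟩

lemma bddBelow_futureInf (hf : BddBelow (f '' Icc a b)) :
    BddBelow ((fun r => intervalInf f r b) '' Icc a b) :=
  ⟨intervalInf f a b, forall_mem_image.2 fun _ hr => intervalInf_anti hf hr.1 hr.2 le_rfl⟩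

-- Both sides are the infimum of `f s + g r` over the triangle `a ≤ r ≤ s ≤ b`.
lemma intervalInf_add_intervalInf_comm (hab : a ≤ b) (hf : BddBelow (f '' Icc a b))
    (hg : BddBelow (g '' Icc a b)) :
    intervalInf (fun s => f s + intervalInf g a s) a b
      = intervalInf (fun r => g r + intervalInf f r b) a b := by
  refine eq_of_forall_le_iff fun c => ?_
  have le_left : c ≤ intervalInf (fun s => f s + intervalInf g a s) a b ↔
      ∀ s ∈ Icc a b, ∀ r ∈ Icc a s, c - f s ≤ g r := by
    rw [le_intervalInf_iff hab (bddBelow_image_add hf (bddBelow_runningInf hg))]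
    refine forall₂_congr fun s hs => ?_
    rw [← sub_le_iff_le_add',
      le_intervalInf_iff hs.1 (hg.mono (image_mono (Icc_subset_Icc_right hs.2)))]
  have le_right : c ≤ intervalInf (fun r => g r + intervalInf f r b) a b ↔
      ∀ r ∈ Icc a b, ∀ s ∈ Icc r b, c - g r ≤ f s := by
    rw [le_intervalInf_iff hab (bddBelow_image_add hg (bddBelow_futureInf hf))]
    refine forall₂_congr fun r hr => ?_
    rw [← sub_le_iff_le_add',
      le_intervalInf_iff hr.2 (hf.mono (image_mono (Icc_subset_Icc_left hr.1)))]
  rw [le_left, le_right]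
  constructor
  · intro h r hr s hs
    exact sub_le_comm.1 (h s ⟨hr.1.trans hs.1, hs.2⟩ r ⟨hr.1, hs.1⟩)
  · intro h s hs r hr
    exact sub_le_comm.1 (h r ⟨hr.1, hr.2.trans hs.2⟩ s ⟨hr.2, hs.2⟩)

lemma continuousOn_intervalInf (hf : ContinuousOn f (Icc a b)) :
    ContinuousOn (intervalInf f a) (Icc a b) := by
  intro t₀ ht₀
  have hab := ht₀.1.trans ht₀.2
  set g : ℝ → ℝ := IccExtend hab ((Icc a b).domRestrict f)
  have hg : Continuous g := hf.domRestrict.Icc_extend'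
  have hgf : EqOn g f (Icc a b) := fun s hs => IccExtend_of_mem hab _ hs
  have hcont : Continuous fun t => sInf ((fun u => g (AffineMap.lineMap a t u)) '' Icc (0 : ℝ) 1) :=
    isCompact_Icc.continuous_sInf (by simp only [AffineMap.lineMap_apply_module]; fun_prop)
  refine hcont.continuousOn.congr (fun t ht => ?_) t₀ ht₀
  beta_reduce
  rw [← image_image g, ← segment_eq_image_lineMap, segment_eq_Icc ht.1,
    (hgf.mono (Icc_subset_Icc_right ht.2)).image_eq, intervalInf]

lemma exists_eq_intervalInf (hf : ContinuousOn f (Icc a b)) (hab : a ≤ b) :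
    ∃ s ∈ Icc a b, f s = intervalInf f a b := by
  obtain ⟨s, hs, h⟩ := isCompact_Icc.exists_sInf_image_eq (nonempty_Icc.2 hab) hf
  exact ⟨s, hs, h.symm⟩

-- A minimizer over `[a, s]` is a record time, and `s` may be chosen by the intermediate value
-- theorem so that the record is `c`.
lemma exists_eq_runningInf_eq (hf : ContinuousOn f (Icc a b)) (hr : r ∈ Icc a b)
    (hc : c ∈ Ico (intervalInf f a b) (intervalInf f a r)) :
    ∃ v ∈ Icc r b, f v = c ∧ intervalInf f a v = c := by
  have bdd : ∀ {u}, u ≤ b → BddBelow (f '' Icc a u) := fun hu =>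
    isCompact_Icc.bddBelow_image (hf.mono (Icc_subset_Icc_right hu))
  obtain ⟨s, hs, hsc⟩ := intermediate_value_Icc' hr.2
    ((continuousOn_intervalInf hf).mono (Icc_subset_Icc_left hr.1)) ⟨hc.1, hc.2.le⟩
  obtain ⟨v, hv, hvs⟩ := exists_eq_intervalInf (hf.mono (Icc_subset_Icc_right hs.2))
    (hr.1.trans hs.1)
  have hfv : f v = c := hvs.trans hsc
  have hrv : r ≤ v := by
    by_contra! hvr
    exact (intervalInf_le (bdd hr.2) ⟨hv.1, hvr.le⟩).not_gt (hfv ▸ hc.2)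
  refine ⟨v, ⟨hrv, hv.2.trans hs.2⟩, hfv, le_antisymm ?_ ?_⟩
  · exact hfv ▸ intervalInf_le (bdd (hv.2.trans hs.2)) (right_mem_Icc.2 hv.1)
  · exact hsc ▸ intervalInf_anti (bdd hs.2) le_rfl hv.1 hv.2

end IntervalInf

section PitmanIdentity

variable {x ψ : ℝ → ℝ} {a b c r : ℝ}

lemma intervalInf_sub_two_mul_runningInf (hx : ContinuousOn x (Icc a b)) (hr : r ∈ Icc a b) :
    intervalInf (fun s => x s - 2 * intervalInf x a s) r b
      = intervalInf x r b - intervalInf x a r - intervalInf x a b := by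
  set m := intervalInf x a with hm
  have bdd : BddBelow (x '' Icc a b) := isCompact_Icc.bddBelow_image hx
  have anti : ∀ {s u}, a ≤ s → s ≤ u → u ≤ b → m u ≤ m s := fun has hsu hub =>
    intervalInf_anti (bdd.mono (image_mono (Icc_subset_Icc_right hub))) le_rfl has hsu
  have m_le : ∀ {s}, s ∈ Icc a b → m s ≤ x s := fun hs =>
    intervalInf_le (bdd.mono (image_mono (Icc_subset_Icc_right hs.2))) (right_mem_Icc.2 hs.1)
  have hmb : m b = min (m r) (intervalInf x r b) := intervalInf_eq_min bdd hr
  rcases le_or_gt (m r) (intervalInf x r b) with no_record | new_record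
  · rw [min_eq_left no_record] at hmb
    have m_const : EqOn m (fun _ => m r) (Icc r b) := fun s hs =>
      le_antisymm (anti hr.1 hs.1 hs.2) (hmb ▸ anti (hr.1.trans hs.1) hs.2 le_rfl)
    rw [intervalInf_congr (g := fun s => x s - 2 * m r) fun s hs => by simp only [m_const hs],
      intervalInf_sub_const hr.2 (bdd.mono (image_mono (Icc_subset_Icc_left hr.1))), hmb]
    ring
  · rw [min_eq_right new_record.le] at hmb
    have lower : ∀ s ∈ Icc r b, -m r ≤ x s - 2 * m s := fun s hs => by
      linarith [anti hr.1 hs.1 hs.2, m_le ⟨hr.1.trans hs.1, hs.2⟩]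
    have bdd_pitman : BddBelow ((fun s => x s - 2 * m s) '' Icc r b) :=
      ⟨_, forall_mem_image.2 lower⟩
    rw [← hmb, sub_sub_cancel_left]
    refine le_antisymm (le_neg.2 (le_of_forall_lt_imp_le_of_dense fun y hy => ?_))
      ((le_intervalInf_iff hr.2 bdd_pitman).2 lower)
    obtain ⟨v, hv, hxv, hmv⟩ := exists_eq_runningInf_eq hx hr
      ⟨le_max_right y (m b), max_lt hy (hmb ▸ new_record)⟩
    have h := intervalInf_le bdd_pitman hv
    simp only [hm, hxv, hmv] at h
    linarith [le_max_left y (m b)]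

lemma intervalInf_const_mul_pitman_add (hc : 0 ≤ c) (hab : a ≤ b) (hx : ContinuousOn x (Icc a b))
    (hψ : BddBelow (ψ '' Icc a b)) :
    intervalInf (fun s => c * (x s - 2 * intervalInf x a s)
        + intervalInf (fun r => c * intervalInf x a r + ψ r) a s) a b
      = intervalInf (fun s => c * x s + intervalInf ψ a s) a b - c * intervalInf x a b := by
  set m := intervalInf x a
  have hm : ContinuousOn m (Icc a b) := continuousOn_intervalInf hx
  have bdd_cx : BddBelow ((fun s => c * x s) '' Icc a b) :=
    isCompact_Icc.bddBelow_image (by fun_prop)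
  have bdd_cm : BddBelow ((fun s => c * m s) '' Icc a b) :=
    isCompact_Icc.bddBelow_image (by fun_prop)
  have bdd_pitman : BddBelow ((fun s => c * (x s - 2 * m s)) '' Icc a b) :=
    isCompact_Icc.bddBelow_image (by fun_prop)
  have pitman_from : ∀ r ∈ Icc a b, intervalInf (fun s => c * (x s - 2 * m s)) r b
      = intervalInf (fun s => c * x s) r b - c * m r - c * m b := fun r hr => by
    rw [intervalInf_const_mul hc, intervalInf_sub_two_mul_runningInf hx hr,
      intervalInf_const_mul hc]
    ring
  calc _ = intervalInf (fun r => c * m r + ψ r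
          + intervalInf (fun s => c * (x s - 2 * m s)) r b) a b :=
        intervalInf_add_intervalInf_comm hab bdd_pitman (bddBelow_image_add bdd_cm hψ)
    _ = intervalInf (fun r => ψ r + intervalInf (fun s => c * x s) r b - c * m b) a b :=
        intervalInf_congr fun r hr => by simp only [pitman_from r hr]; ring
    _ = intervalInf (fun r => ψ r + intervalInf (fun s => c * x s) r b) a b - c * m b :=
        intervalInf_sub_const hab (bddBelow_image_add hψ (bddBelow_futureInf bdd_cx)) _
    _ = _ := by rw [intervalInf_add_intervalInf_comm hab bdd_cx hψ]

end PitmanIdentity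

/-- The infimum over `t ≥ s₀ ≥ s₁ ≥ ⋯ ≥ s₍k₋₁₎ ≥ 0` of
`W 0 * x s₀ + W 1 * y s₁ + W 2 * x s₂ + ⋯` (`k` terms, `x` and `y` alternating), computed as nested
running infima. These are the coefficients in the closed formula for alternating compositions of
Pitman transforms. -/
noncomputable def chainInf : ℕ → (ℕ → ℝ) → (ℝ → ℝ) → (ℝ → ℝ) → ℝ → ℝ
  | 0, _, _, _ => 0
  | k + 1, W, x, y => intervalInf (fun s => W 0 * x s + chainInf k (fun i => W (i + 1)) y x s) 0

section ChainInf

variable {t κ : ℝ} {x y : ℝ → ℝ}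

lemma continuousOn_chainInf (k : ℕ) (W : ℕ → ℝ) (hx : ContinuousOn x (Icc 0 t))
    (hy : ContinuousOn y (Icc 0 t)) : ContinuousOn (chainInf k W x y) (Icc 0 t) := by
  induction k generalizing W x y with
  | zero => exact continuousOn_const
  | succ k ih =>
    exact continuousOn_intervalInf ((hx.const_mul (W 0)).add (ih (fun i => W (i + 1)) hy hx))

lemma chainInf_one {W : ℕ → ℝ} (hW : 0 ≤ W 0) (x y : ℝ → ℝ) (t : ℝ) :
    chainInf 1 W x y t = W 0 * intervalInf x 0 t := by
  simp only [chainInf, Pi.zero_apply, add_zero, intervalInf_const_mul hW]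

lemma chainInf_succ_of_eq_zero {k : ℕ} {W : ℕ → ℝ} (hW : W k = 0) (x y : ℝ → ℝ) :
    chainInf (k + 1) W x y = chainInf k W x y := by
  induction k generalizing W x y with
  | zero =>
    funext t
    rw [chainInf_one hW.ge, hW, zero_mul]
    rfl
  | succ k ih => rw [chainInf, ih hW, ← chainInf]

lemma chainInf_even_pitman (l : ℕ) {W : ℕ → ℝ} (hW : ∀ i, W (i + 2) = κ * W (i + 1) - W i)
    (hpos : ∀ i ≤ 2 * l, 0 ≤ W i) (ht : 0 ≤ t) (hx : ContinuousOn x (Icc 0 t))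
    (hy : ContinuousOn y (Icc 0 t)) :
    chainInf (2 * l) W (fun s => x s - 2 * intervalInf x 0 s)
        (fun s => y s + κ * intervalInf x 0 s) t
      = chainInf (2 * l + 1) W x y t - W 0 * intervalInf x 0 t := by
  induction l generalizing W t with
  | zero =>
    rw [mul_zero, zero_add, chainInf_one (hpos 0 le_rfl), sub_self]
    rfl
  | succ l ih =>
    set m := intervalInf x 0
    set W₂ : ℕ → ℝ := fun i => W (i + 2)
    set ψ : ℝ → ℝ := fun r => W 1 * y r + chainInf (2 * l + 1) W₂ x y r
    have hψ : BddBelow (ψ '' Icc 0 t) := isCompact_Icc.bddBelow_image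
      ((hy.const_mul (W 1)).add (continuousOn_chainInf _ W₂ hx hy))
    have inner : ∀ r ∈ Icc 0 t,
        W 1 * (y r + κ * m r)
          + chainInf (2 * l) W₂ (fun s => x s - 2 * m s) (fun s => y s + κ * m s) r
        = W 0 * m r + ψ r := fun r hr => by
      have hrt : Icc 0 r ⊆ Icc 0 t := Icc_subset_Icc_right hr.2
      rw [ih (fun i => hW (i + 2)) (fun i hi => hpos (i + 2) (by lia)) hr.1 (hx.mono hrt)
        (hy.mono hrt)]
      simp only [W₂, ψ, m, hW 0, zero_add]
      ring
    calc _ = intervalInf (fun s => W 0 * (x s - 2 * m s)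
            + intervalInf (fun r => W 0 * m r + ψ r) 0 s) 0 t :=
          intervalInf_congr fun s hs => congrArg (W 0 * (x s - 2 * m s) + ·)
            (intervalInf_congr fun r hr => inner r ⟨hr.1, hr.2.trans hs.2⟩)
      _ = _ := intervalInf_const_mul_pitman_add (hpos 0 (Nat.zero_le _)) ht hx hψ

lemma chainInf_odd_pitman (l : ℕ) {W : ℕ → ℝ} (hW₁ : W 1 = κ * W 0)
    (hW : ∀ i, W (i + 2) = κ * W (i + 1) - W i) (hpos : ∀ i ≤ 2 * l + 1, 0 ≤ W i)
    (hx : ContinuousOn x (Icc 0 t)) (hy : ContinuousOn y (Icc 0 t)) :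
    chainInf (2 * l + 1) W (fun s => y s + κ * intervalInf x 0 s)
        (fun s => x s - 2 * intervalInf x 0 s) t
      = chainInf (2 * l + 2) W y x t := by
  refine intervalInf_congr fun s hs => ?_
  have hst : Icc 0 s ⊆ Icc 0 t := Icc_subset_Icc_right hs.2
  beta_reduce
  rw [chainInf_even_pitman l (fun i => hW (i + 1)) (fun i hi => hpos (i + 1) (by lia)) hs.1
    (hx.mono hst) (hy.mono hst), hW₁]
  ring

end ChainInf

/-- The weights `S_i(κ)` of the closed formula, with `S_i` the rescaled Chebyshev polynomials of
the second kind: `S_i(2 cos θ) = sin ((i + 1) θ) / sin θ`. -/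
noncomputable def chebyshevWeight (κ : ℝ) (i : ℕ) : ℝ := (Polynomial.Chebyshev.S ℝ i).eval κ

lemma chebyshevWeight_zero (κ : ℝ) : chebyshevWeight κ 0 = 1 := by simp [chebyshevWeight]

lemma chebyshevWeight_one (κ : ℝ) : chebyshevWeight κ 1 = κ := by simp [chebyshevWeight]

lemma chebyshevWeight_add_two (κ : ℝ) (i : ℕ) :
    chebyshevWeight κ (i + 2) = κ * chebyshevWeight κ (i + 1) - chebyshevWeight κ i := by
  simp [chebyshevWeight, Polynomial.Chebyshev.S_add_two]

lemma chebyshevWeight_two_mul_cos {θ : ℝ} (hθ : Real.sin θ ≠ 0) (i : ℕ) :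
    chebyshevWeight (2 * Real.cos θ) i = Real.sin ((i + 1) * θ) / Real.sin θ :=
  eq_div_of_mul_eq hθ (mod_cast Polynomial.Chebyshev.S_two_mul_real_cos θ i)

lemma sin_pi_div_pos {n : ℕ} (hn : 2 ≤ n) : 0 < Real.sin (Real.pi / n) := by
  have hn' : (1 : ℝ) < n := by exact_mod_cast hn
  exact Real.sin_pos_of_pos_of_lt_pi (by positivity) (div_lt_self Real.pi_pos hn')

lemma chebyshevWeight_two_mul_cos_pi_div_nonneg {n i : ℕ} (hn : 2 ≤ n) (hi : i + 1 ≤ n) :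
    0 ≤ chebyshevWeight (2 * Real.cos (Real.pi / n)) i := by
  have angle_le : (i + 1) * (Real.pi / n) ≤ Real.pi := calc
    (i + 1) * (Real.pi / n) ≤ n * (Real.pi / n) := by gcongr; exact_mod_cast hi
    _ = Real.pi := mul_div_cancel₀ _ (by positivity)
  rw [chebyshevWeight_two_mul_cos (sin_pi_div_pos hn).ne']
  exact div_nonneg (Real.sin_nonneg_of_nonneg_of_le_pi (by positivity) angle_le)
    (sin_pi_div_pos hn).le

lemma chebyshevWeight_two_mul_cos_pi_div_succ {n : ℕ} (hn : 2 ≤ n + 1) :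
    chebyshevWeight (2 * Real.cos (Real.pi / (n + 1 : ℕ))) n = 0 := by
  have hpi : (n + 1 : ℝ) * (Real.pi / (n + 1 : ℕ)) = Real.pi := by
    push_cast
    field_simp
  rw [chebyshevWeight_two_mul_cos (sin_pi_div_pos hn).ne', hpi, Real.sin_pi, zero_div]

section Pitman

variable {V : Type*} [AddCommGroup V] [Module ℝ V] {α β : V} {αv βv : Module.Dual ℝ V}

lemma apply_pitman (γ : Module.Dual ℝ V) (α : V) (αv : Module.Dual ℝ V) (π : ℝ → V) (t : ℝ) :
    γ (pitman α αv π t) = γ (π t) - γ α * intervalInf (fun s => αv (π s)) 0 t := by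
  simp only [pitman, intervalInf, map_sub, map_smul, smul_eq_mul, mul_comm]

lemma continuousOn_apply_pitman {t : ℝ} {π : ℝ → V} {γ : Module.Dual ℝ V}
    (hγ : ContinuousOn (fun s => γ (π s)) (Icc 0 t))
    (hα : ContinuousOn (fun s => αv (π s)) (Icc 0 t)) (α : V) :
    ContinuousOn (fun s => γ (pitman α αv π s)) (Icc 0 t) := by
  simp only [apply_pitman]
  exact hγ.sub ((continuousOn_intervalInf hα).const_mul (γ α))

lemma pitman_smul_inv_smul (α : V) (αv : Module.Dual ℝ V) {c : ℝ} (hc : 0 < c) :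
    pitman (c • α) (c⁻¹ • αv) = pitman α αv := by
  funext π t
  have h := intervalInf_const_mul (inv_nonneg.2 hc.le) (fun s => αv (π s)) 0 t
  simp only [intervalInf] at h
  simp only [pitman, LinearMap.smul_apply, smul_eq_mul, h, smul_smul]
  rw [mul_right_comm, inv_mul_cancel₀ hc.ne', one_mul]

lemma altComp_succ_eq_comp {X : Type*} (n : ℕ) (P Q : X → X) :
    altComp P Q (n + 1) = altComp P Q n ∘ if Even n then P else Q := by
  induction n generalizing P Q with
  | zero => simp [altComp]
  | succ n ih =>
    rw [altComp, ih, altComp, Function.comp_assoc]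
    by_cases h : Even n <;> simp [h, Nat.even_add_one]

theorem altComp_pitman_succ_eq_chainInf {κ t : ℝ} (hα : αv α = 2) (hβ : βv β = 2) (hαβ : αv β = -κ)
    (hβα : βv α = -κ) (n : ℕ) (hpos : ∀ i ≤ n, 0 ≤ chebyshevWeight κ i) (ht : 0 ≤ t) (π : ℝ → V)
    (hx : ContinuousOn (fun s => αv (π s)) (Icc 0 t))
    (hy : ContinuousOn (fun s => βv (π s)) (Icc 0 t)) :
    altComp (pitman α αv) (pitman β βv) (n + 1) π t
      = π t
        - chainInf (n + 1) (chebyshevWeight κ) (fun s => αv (π s)) (fun s => βv (π s)) t • α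
        - chainInf n (chebyshevWeight κ) (fun s => βv (π s)) (fun s => αv (π s)) t • β := by
  have recurrence := chebyshevWeight_add_two κ
  have initial : chebyshevWeight κ 1 = κ * chebyshevWeight κ 0 := by
    rw [chebyshevWeight_zero, chebyshevWeight_one, mul_one]
  induction n generalizing π with
  | zero =>
    rw [chainInf_one (hpos 0 le_rfl), chebyshevWeight_zero, one_mul]
    simp [altComp, pitman, intervalInf, chainInf]
  | succ n ih =>
    have ih := ih fun i hi => hpos i (by lia)
    rw [altComp_succ_eq_comp, Function.comp_apply]
    rcases Nat.even_or_odd' n with ⟨l, rfl | rfl⟩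
    · rw [if_neg (by simp), ih _ (continuousOn_apply_pitman hx hy β)
        (continuousOn_apply_pitman hy hy β)]
      simp only [apply_pitman, hβ, hαβ, neg_mul, sub_neg_eq_add]
      rw [chainInf_odd_pitman l initial recurrence hpos hy hx,
        chainInf_even_pitman l recurrence (fun i hi => hpos i (by lia)) ht hy hx,
        chebyshevWeight_zero, pitman, ← intervalInf]
      module
    · rw [if_pos (by simp [Nat.even_add_one]), ih _ (continuousOn_apply_pitman hx hx α)
        (continuousOn_apply_pitman hy hx α)]
      simp only [apply_pitman, hα, hβα, neg_mul, sub_neg_eq_add]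
      rw [chainInf_odd_pitman l initial recurrence (fun i hi => hpos i (by lia)) hx hy,
        show 2 * l + 1 + 1 = 2 * (l + 1) by ring,
        chainInf_even_pitman (l + 1) recurrence (fun i hi => hpos i (by lia)) ht hx hy,
        chebyshevWeight_zero, pitman, ← intervalInf]
      module

theorem altComp_pitman_comm {κ t : ℝ} (hα : αv α = 2) (hβ : βv β = 2) (hαβ : αv β = -κ)
    (hβα : βv α = -κ) (n : ℕ) (hpos : ∀ i ≤ n, 0 ≤ chebyshevWeight κ i)
    (hzero : chebyshevWeight κ n = 0) (ht : 0 ≤ t) (π : ℝ → V)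
    (hx : ContinuousOn (fun s => αv (π s)) (Icc 0 t))
    (hy : ContinuousOn (fun s => βv (π s)) (Icc 0 t)) :
    altComp (pitman α αv) (pitman β βv) (n + 1) π t
      = altComp (pitman β βv) (pitman α αv) (n + 1) π t := by
  rw [altComp_pitman_succ_eq_chainInf hα hβ hαβ hβα n hpos ht π hx hy,
    altComp_pitman_succ_eq_chainInf hβ hα hβα hαβ n hpos ht π hy hx,
    chainInf_succ_of_eq_zero hzero, chainInf_succ_of_eq_zero hzero, sub_right_comm]

end Pitman

lemma exists_pos_inv_mul_eq_mul {a b κ : ℝ} (ha : a ≤ 0) (hb : b ≤ 0) (h : a = 0 ↔ b = 0)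
    (hκ : 0 ≤ κ) (hab : a * b = κ ^ 2) : ∃ c > 0, c⁻¹ * a = -κ ∧ c * b = -κ := by
  rcases hb.eq_or_lt with hb₀ | hb₀
  · have hκ₀ : κ = 0 := pow_eq_zero_iff two_ne_zero |>.1 (by rw [← hab, hb₀, mul_zero])
    exact ⟨1, one_pos, by simp [h.2 hb₀, hκ₀], by simp [hb₀, hκ₀]⟩
  · have ha₀ : a < 0 := ha.lt_of_ne (mt h.1 hb₀.ne)
    have hκ₀ : 0 < κ := by
      refine hκ.lt_of_ne' fun h₀ => (mul_pos_of_neg_of_neg ha₀ hb₀).ne' ?_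
      rw [hab, h₀, zero_pow two_ne_zero]
    refine ⟨κ / -b, div_pos hκ₀ (neg_pos.2 hb₀), ?_, ?_⟩
    · rw [inv_div, div_mul_eq_mul_div, div_eq_iff hκ₀.ne']
      linarith
    · rw [div_neg, neg_mul, div_mul_cancel₀ _ hb₀.ne]

theorem pitman_braid_general {V : Type*} [AddCommGroup V] [Module ℝ V]
    (T : ℝ) (α β : V) (αv βv : Module.Dual ℝ V)
    (hα : αv α = 2) (hβ : βv β = 2)
    (hαβ : αv β ≤ 0) (hβα : βv α ≤ 0) (hzero : αv β = 0 ↔ βv α = 0)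
    (n : ℕ) (hn : 2 ≤ n)
    (hcos : αv β * βv α = 4 * Real.cos (Real.pi / n) ^ 2)
    (π : ℝ → V) (hx : ContinuousOn (fun s => αv (π s)) (Icc 0 T))
    (hy : ContinuousOn (fun s => βv (π s)) (Icc 0 T)) :
    EqOn (altComp (pitman α αv) (pitman β βv) n π)
      (altComp (pitman β βv) (pitman α αv) n π) (Icc 0 T) := by
  intro t ht
  obtain ⟨n, rfl⟩ : ∃ k, n = k + 1 := Nat.exists_eq_add_of_le' (by lia)
  have hcos_nonneg : 0 ≤ Real.cos (Real.pi / (n + 1 : ℕ)) :=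
    Real.cos_nonneg_of_neg_pi_div_two_le_of_le
      ((neg_nonpos.2 Real.pi_div_two_pos.le).trans (by positivity))
      (div_le_div_of_nonneg_left Real.pi_pos.le two_pos (by exact_mod_cast hn))
  obtain ⟨c, hc, hαβ', hβα'⟩ := exists_pos_inv_mul_eq_mul hαβ hβα hzero
    (mul_nonneg zero_le_two hcos_nonneg) (by rw [hcos]; ring)
  have hα' : (c⁻¹ • αv) (c • α) = 2 := by simp [hα, hc.ne']
  have htT : Icc 0 t ⊆ Icc 0 T := Icc_subset_Icc_right ht.2
  rw [← pitman_smul_inv_smul α αv hc]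
  exact altComp_pitman_comm hα' hβ (by simpa using hαβ') (by simpa using hβα') n
    (fun i hi => chebyshevWeight_two_mul_cos_pi_div_nonneg hn (by lia))
    (chebyshevWeight_two_mul_cos_pi_div_succ hn) ht.1 π
    ((hx.mono htT).const_mul c⁻¹) (hy.mono htT)

/-- Braid relations for the Pitman transforms (Theorem 2.3 of Biane–Bougerol–O'Connell):
if `α∨(α) = β∨(β) = 2`, `α∨(β) < 0`, `β∨(α) < 0` and
`α∨(β)·β∨(α) = 4 cos²(π/n)` for some integer `n ≥ 2`, then
`P_α P_β P_α ⋯ = P_β P_α P_β ⋯` (`n` alternating factors on each side). -/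
theorem pitman_braid
    {V : Type*} [NormedAddCommGroup V] [NormedSpace ℝ V] [FiniteDimensional ℝ V]
    (T : ℝ) (hT : 0 < T) (α β : V) (αv βv : Module.Dual ℝ V)
    (hα : αv α = 2) (hβ : βv β = 2)
    (hαβ : αv β < 0) (hβα : βv α < 0)
    (n : ℕ) (hn : 2 ≤ n)
    (hcos : αv β * βv α = 4 * Real.cos (Real.pi / n) ^ 2)
    (π : ℝ → V) (hcont : ContinuousOn π (Set.Icc 0 T)) (h0 : π 0 = 0) :
    ∀ t ∈ Set.Icc 0 T,
      altComp (pitman α αv) (pitman β βv) n π t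
        = altComp (pitman β βv) (pitman α αv) n π t := by
  exact pitman_braid_general T α β αv βv hα hβ hαβ.le hβα.le (by simp [hαβ.ne, hβα.ne]) n hn hcos π
    (αv.continuous_of_finiteDimensional.comp_continuousOn hcont)
    (βv.continuous_of_finiteDimensional.comp_continuousOn hcont)
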